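/- arXiv:1702.07242 — 4 statements merged into one kernel-verified Lean document; each statement's English description precedes it below -/
import Mathlib

section
/- Let (L, E, U) be an LEU-decomposition of a matrix A ∈ F_{I,J}. Then the inverse matrices satisfy L⁻¹ = (𝟙 − I_E) + L⁻¹ I_E and U⁻¹ = (𝟙 − J_E) + J_E U⁻¹. -/
open Matrix

/-- `P_n`: matrices all of whose entries lie in `{0,1}`, with at most one nonzero
entry in each row and at most one nonzero entry in each column. -/
def InP {F : Type*} [Field F] {m : Type*} (E : Matrix m m F) : Prop :=
  (∀ i j, E i j = 0 ∨ E i j = 1) ∧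
  (∀ i j k, E i j ≠ 0 → E i k ≠ 0 → j = k) ∧
  (∀ i j k, E i j ≠ 0 → E k j ≠ 0 → i = k)

/-- `D_n`: diagonal matrices with diagonal entries in `{0,1}`. -/
def InD {F : Type*} [Field F] {m : Type*} (M : Matrix m m F) : Prop :=
  M.IsDiag ∧ ∀ i, M i i = 0 ∨ M i i = 1

/-- `F_{I,J}`: the set of matrices `B` with `I * B * J = B`. -/
def InFIJ {F : Type*} [Field F] {n : ℕ} (I J B : Matrix (Fin n) (Fin n) F) : Prop :=
  I * B * J = B

/-- `(L, E, U)` is an LEU-decomposition of `A ∈ F_{I,J}`: `A = L⁻¹ * E * U⁻¹`,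
`E ∈ P_n`, `L` is an invertible lower triangular matrix, `U` is an upper
triangular matrix with unit diagonal, `L - (𝟙 - I_E) ∈ F_{I, I_E}` and
`U - (𝟙 - J_E) ∈ F_{J_E, J}`, where `I_E = E * Eᵀ` and `J_E = Eᵀ * E`. -/
def IsLEU {F : Type*} [Field F] {n : ℕ}
    (I J A L E U : Matrix (Fin n) (Fin n) F) : Prop :=
  A = L⁻¹ * E * U⁻¹ ∧ InP E ∧ IsUnit L ∧
  (∀ i j : Fin n, i < j → L i j = 0) ∧
  (∀ i j : Fin n, j < i → U i j = 0) ∧ (∀ i, U i i = 1) ∧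
  InFIJ I (E * Eᵀ) (L - (1 - E * Eᵀ)) ∧
  InFIJ (Eᵀ * E) J (U - (1 - Eᵀ * E))

/-!
Put `P = E Eᵀ`, which is idempotent because `E Eᵀ E = E`. A matrix `X` with `I X P = X` is killed by
`1 - P` on the right, so `L = (1 - P) + X` fixes `1 - P`, that is `L (1 - P) = 1 - P`. Then `L⁻¹`
fixes `1 - P` as well, and `L⁻¹ = L⁻¹ (1 - P) + L⁻¹ P` is the claim. The claim on `U` is the same
statement in the opposite ring, with `P` replaced by `Eᵀ E`.
-/

section Ring

variable {R : Type*} [Ring R] {a p x y : R}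

theorem mul_one_sub_eq_one_sub (hp : IsIdempotentElem p)
    (hx : a * (x - (1 - p)) * p = x - (1 - p)) : x * (1 - p) = 1 - p := by
  have sub_mul_eq_zero : (x - (1 - p)) * (1 - p) = 0 := by
    rw [← hx, mul_assoc, hp.mul_one_sub_self, mul_zero]
  rwa [sub_mul, hp.one_sub.eq, sub_eq_zero] at sub_mul_eq_zero

theorem left_inv_eq_one_sub_add_mul (hp : IsIdempotentElem p) (hyx : y * x = 1)
    (hx : a * (x - (1 - p)) * p = x - (1 - p)) : y = (1 - p) + y * p := by
  have inv_mul_one_sub : y * (1 - p) = 1 - p :=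
    calc y * (1 - p) = y * (x * (1 - p)) := by rw [mul_one_sub_eq_one_sub hp hx]
      _ = 1 - p := by rw [← mul_assoc, hyx, one_mul]
  rw [← inv_mul_one_sub, mul_sub, mul_one, sub_add_cancel]

open MulOpposite in
theorem right_inv_eq_one_sub_add_mul (hp : IsIdempotentElem p) (hxy : x * y = 1)
    (hx : p * (x - (1 - p)) * a = x - (1 - p)) : y = (1 - p) + p * y := by
  have hx_op : op a * (op x - (1 - op p)) * op p = op x - (1 - op p) :=
    unop_injective (by simpa [mul_assoc] using hx)
  exact op_injective
    (left_inv_eq_one_sub_add_mul (congrArg op hp.eq) (congrArg op hxy) hx_op)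

end Ring

theorem isUnit_of_isUpperTriangular_of_diag_eq_one {R m : Type*} [CommRing R] [Fintype m]
    [LinearOrder m] {U : Matrix m m R} (hU : U.IsUpperTriangular) (hdiag : ∀ i, U i i = 1) :
    IsUnit U := by
  rw [isUnit_iff_isUnit_det, det_of_isUpperTriangular hU]
  simp only [hdiag, Finset.prod_const_one, isUnit_one]

namespace InP

variable {F m : Type*} [Field F] {E : Matrix m m F}

protected theorem transpose (hE : InP E) : InP Eᵀ :=
  ⟨fun i j => hE.1 j i, fun i j k => hE.2.2 j i k, fun i j k => hE.2.1 j i k⟩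

theorem mul_eq_ite_of_row [DecidableEq m] (hE : InP E) (i j k : m) :
    E i j * E i k = if j = k then E i k else 0 := by
  obtain ⟨zero_or_one, row_unique, -⟩ := hE
  split_ifs with hjk
  · subst hjk
    rcases zero_or_one i j with h | h <;> simp [h]
  · by_contra hne
    exact hjk (row_unique i j k (left_ne_zero_of_mul hne) (right_ne_zero_of_mul hne))

theorem mul_eq_ite_of_col [DecidableEq m] (hE : InP E) (i j k : m) :
    E i k * E j k = if i = j then E j k else 0 :=
  hE.transpose.mul_eq_ite_of_row k i j

theorem mul_transpose_mul_self [Fintype m] (hE : InP E) : E * Eᵀ * E = E := by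
  classical
  ext i l
  calc (E * Eᵀ * E) i l = ∑ k, (∑ j, E i j * E k j) * E k l := by
        simp only [mul_apply, transpose_apply]
    _ = ∑ j, E i j * E i l := by
        simp [hE.mul_eq_ite_of_col, Finset.sum_mul]
    _ = E i l := by simp [hE.mul_eq_ite_of_row]

end InP

theorem leu_inv_blocks_general {R m k : Type*} [CommRing R] [Fintype m] [DecidableEq m]
    [Fintype k] [DecidableEq k] {I L : Matrix m m R} {J U : Matrix k k R} {E : Matrix m k R}
    (hE : E * Eᵀ * E = E) (hL : IsUnit L) (hU : IsUnit U)
    (hLI : I * (L - (1 - E * Eᵀ)) * (E * Eᵀ) = L - (1 - E * Eᵀ))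
    (hUJ : Eᵀ * E * (U - (1 - Eᵀ * E)) * J = U - (1 - Eᵀ * E)) :
    L⁻¹ = (1 - E * Eᵀ) + L⁻¹ * (E * Eᵀ) ∧
    U⁻¹ = (1 - Eᵀ * E) + (Eᵀ * E) * U⁻¹ := by
  have hI_E : IsIdempotentElem (E * Eᵀ) := by
    rw [IsIdempotentElem, ← Matrix.mul_assoc, hE]
  have hJ_E : IsIdempotentElem (Eᵀ * E) := by
    rw [IsIdempotentElem, Matrix.mul_assoc, ← Matrix.mul_assoc E, hE]
  rw [isUnit_iff_isUnit_det] at hL hU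
  exact ⟨left_inv_eq_one_sub_add_mul hI_E (nonsing_inv_mul L hL) hLI,
    right_inv_eq_one_sub_add_mul hJ_E (mul_nonsing_inv U hU) hUJ⟩

/-- Sentence 1 (second part): if `(L,E,U)` is an LEU-decomposition of
`A ∈ F_{I,J}`, then `L⁻¹ = (𝟙 - I_E) + L⁻¹·I_E` and `U⁻¹ = (𝟙 - J_E) + J_E·U⁻¹`. -/
theorem leu_inv_blocks {F : Type*} [Field F] {n : ℕ} (hn : 0 < n)
    (I J A L E U : Matrix (Fin n) (Fin n) F)
    (hI : InD I) (hJ : InD J) (hA : InFIJ I J A)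
    (hLEU : IsLEU I J A L E U) :
    L⁻¹ = (1 - E * Eᵀ) + L⁻¹ * (E * Eᵀ) ∧
    U⁻¹ = (1 - Eᵀ * E) + (Eᵀ * E) * U⁻¹ := by
  obtain ⟨-, hE, hL, -, hU_upper, hU_diag, hLI, hUJ⟩ := hLEU
  exact leu_inv_blocks_general hE.mul_transpose_mul_self hL
    (isUnit_of_isUpperTriangular_of_diag_eq_one hU_upper hU_diag) hLI hUJ
end

section
/- Let E₁₁, E₁₂, E₂₁, E₂₂ ∈ P_n satisfy E₂₁ = E₂₁(𝟙 − J₁₁), E₁₂ = (𝟙 − I₁₁)E₁₂, and E₂₂ = (𝟙 − I₂₁)E₂₂(𝟙 − J₁₂), where I_{ij} = E_{ij}E_{ij}ᵀ and J_{ij} = E_{ij}ᵀE_{ij}. Then the 2n×2n block matrix E = [[E₁₁, E₁₂],[E₂₁, E₂₂]] belongs to P_{2n}, and the following identities hold: E₁₁E₂₁ᵀ = 0, E₁₂ᵀE₁₁ = 0, E₁₂E₂₂ᵀ = 0, and E₂₂ᵀE₂₁ = 0. -/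
open Matrix

/-- A `2n×2n` matrix built from four `n×n` blocks, indexed by `Fin (n+n)`. -/
def blk {F : Type*} [Field F] {n : ℕ} (A B C D : Matrix (Fin n) (Fin n) F) :
    Matrix (Fin (n + n)) (Fin (n + n)) F :=
  (Matrix.fromBlocks A B C D).submatrix finSumFinEquiv.symm finSumFinEquiv.symm

/-!
If row `i` of `E` has its entry `1` in column `j`, then row `i` of `E * X` is row `j` of `X`. This
gives `E * Eᵀ * E = E`, so `1 - Eᵀ * E` and `1 - E * Eᵀ` annihilate `E` from the right and from the
left, which yields the four products. It also shows that `A * Bᵀ = 0` means that no column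
meets both `A` and `B`, so that `A` stacked on `B` still has at most one entry per column.
-/

/-- Rectangular partial permutation matrices: `InP` with separate row and column index types and
coefficients that need not form a field. -/
structure IsPartialPerm {m n R : Type*} [Zero R] [One R] (E : Matrix m n R) : Prop where
  eq_zero_or_one : ∀ i j, E i j = 0 ∨ E i j = 1
  row_unique : ∀ i j k, E i j ≠ 0 → E i k ≠ 0 → j = k
  col_unique : ∀ i j k, E i j ≠ 0 → E k j ≠ 0 → i = k

theorem inP_iff_isPartialPerm {F m : Type*} [Field F] {E : Matrix m m F} :
    InP E ↔ IsPartialPerm E :=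
  ⟨fun ⟨h01, hrow, hcol⟩ => ⟨h01, hrow, hcol⟩, fun ⟨h01, hrow, hcol⟩ => ⟨h01, hrow, hcol⟩⟩

namespace IsPartialPerm

variable {m n o p R : Type*}

section ZeroOne

variable [Zero R] [One R] {E : Matrix m n R}

theorem transpose (hE : IsPartialPerm E) : IsPartialPerm Eᵀ where
  eq_zero_or_one i j := hE.eq_zero_or_one j i
  row_unique i j k := hE.col_unique j i k
  col_unique i j k := hE.row_unique j i k

theorem submatrix (hE : IsPartialPerm E) {f : o → m} {g : p → n}
    (hf : f.Injective) (hg : g.Injective) : IsPartialPerm (E.submatrix f g) where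
  eq_zero_or_one _ _ := hE.eq_zero_or_one _ _
  row_unique _ _ _ hj hk := hg (hE.row_unique _ _ _ hj hk)
  col_unique _ _ _ hi hk := hf (hE.col_unique _ _ _ hi hk)

end ZeroOne

section Semiring

variable [Semiring R] [Fintype n]

theorem mul_apply_of_ne_zero {E : Matrix m n R} (hE : IsPartialPerm E) {i : m} {j : n}
    (hij : E i j ≠ 0) (X : Matrix n o R) (k : o) : (E * X) i k = X j k := by
  have hone : E i j = 1 := (hE.eq_zero_or_one i j).resolve_left hij
  have hzero : ∀ l, l ≠ j → E i l = 0 := fun l hl =>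
    by_contra fun hil => hl (hE.row_unique i l j hil hij)
  rw [mul_apply, Fintype.sum_eq_single j fun l hl => by rw [hzero l hl, zero_mul], hone, one_mul]

theorem mul_transpose_mul_self [Fintype m] {E : Matrix m n R} (hE : IsPartialPerm E) :
    E * Eᵀ * E = E := by
  ext i j
  by_cases hrow : ∀ l, E i l = 0
  · simp [Matrix.mul_assoc, mul_apply (M := E), hrow]
  · obtain ⟨l, hil⟩ := not_forall.mp hrow
    rw [Matrix.mul_assoc, hE.mul_apply_of_ne_zero hil, hE.transpose.mul_apply_of_ne_zero hil]

theorem apply_eq_zero_of_mul_transpose_eq_zero {A : Matrix m n R} {B : Matrix o n R}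
    (hA : IsPartialPerm A) (hAB : A * Bᵀ = 0) {i : m} {j : n} (hij : A i j ≠ 0) (k : o) :
    B k j = 0 :=
  calc B k j = (A * Bᵀ) i k := (hA.mul_apply_of_ne_zero hij Bᵀ k).symm
    _ = 0 := by rw [hAB, Matrix.zero_apply]

theorem fromRows {A : Matrix m n R} {B : Matrix o n R} (hA : IsPartialPerm A)
    (hB : IsPartialPerm B) (hAB : A * Bᵀ = 0) : IsPartialPerm (Matrix.fromRows A B) where
  eq_zero_or_one := by
    rintro (i | i) j
    exacts [hA.eq_zero_or_one i j, hB.eq_zero_or_one i j]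
  row_unique := by
    rintro (i | i) j k
    exacts [hA.row_unique i j k, hB.row_unique i j k]
  col_unique := by
    rintro (i | i) j (k | k) hi hk
    · exact congrArg Sum.inl (hA.col_unique i j k hi hk)
    · exact (hk (hA.apply_eq_zero_of_mul_transpose_eq_zero hAB hi k)).elim
    · exact (hi (hA.apply_eq_zero_of_mul_transpose_eq_zero hAB hk i)).elim
    · exact congrArg Sum.inr (hB.col_unique i j k hi hk)

theorem fromCols {A : Matrix n m R} {B : Matrix n o R} (hA : IsPartialPerm A)
    (hB : IsPartialPerm B) (hAB : Aᵀ * B = 0) : IsPartialPerm (Matrix.fromCols A B) := by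
  have h := (hA.transpose.fromRows hB.transpose hAB).transpose
  rwa [transpose_fromRows] at h

theorem fromBlocks [Fintype m] [Fintype o] [Fintype p] {A : Matrix m n R} {B : Matrix m p R}
    {C : Matrix o n R} {D : Matrix o p R} (hA : IsPartialPerm A) (hB : IsPartialPerm B)
    (hC : IsPartialPerm C) (hD : IsPartialPerm D) (hAB : Aᵀ * B = 0) (hCD : Cᵀ * D = 0)
    (hAC : A * Cᵀ = 0) (hBD : B * Dᵀ = 0) :
    IsPartialPerm (Matrix.fromBlocks A B C D) := by
  rw [← fromRows_fromCols_eq_fromBlocks]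
  refine (hA.fromCols hB hAB).fromRows (hC.fromCols hD hCD) ?_
  rw [transpose_fromCols, fromCols_mul_fromRows, hAC, hBD, add_zero]

end Semiring

section CommRing

variable [CommRing R] [Fintype m] [Fintype n] {E : Matrix m n R}

theorem mul_transpose_mul_one_sub_eq_zero [DecidableEq n] (hE : IsPartialPerm E)
    (X : Matrix o n R) : E * (X * (1 - Eᵀ * E))ᵀ = 0 := by
  have hann : E * (1 - Eᵀ * E) = 0 := by
    rw [Matrix.mul_sub, Matrix.mul_one, ← Matrix.mul_assoc, hE.mul_transpose_mul_self, sub_self]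
  have hsymm : (1 - Eᵀ * E)ᵀ = 1 - Eᵀ * E := by simp
  rw [transpose_mul, hsymm, ← Matrix.mul_assoc, hann, Matrix.zero_mul]

theorem transpose_mul_one_sub_mul_eq_zero [DecidableEq m] (hE : IsPartialPerm E)
    (X : Matrix m o R) : Eᵀ * ((1 - E * Eᵀ) * X) = 0 := by
  simpa using hE.transpose.mul_transpose_mul_one_sub_eq_zero Xᵀ

end CommRing

end IsPartialPerm

theorem blockE_inP_general {R m n o p : Type*} [CommRing R] [Fintype m] [Fintype n] [Fintype o]
    [Fintype p] [DecidableEq m] [DecidableEq n] [DecidableEq o] [DecidableEq p]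
    {E₁₁ : Matrix m n R} {E₁₂ : Matrix m p R} {E₂₁ : Matrix o n R} {E₂₂ : Matrix o p R}
    (h11 : IsPartialPerm E₁₁) (h12 : IsPartialPerm E₁₂) (h21 : IsPartialPerm E₂₁)
    (h22 : IsPartialPerm E₂₂)
    (he21 : E₂₁ = E₂₁ * (1 - E₁₁ᵀ * E₁₁))
    (he12 : E₁₂ = (1 - E₁₁ * E₁₁ᵀ) * E₁₂)
    (he22 : E₂₂ = (1 - E₂₁ * E₂₁ᵀ) * E₂₂ * (1 - E₁₂ᵀ * E₁₂)) :
    IsPartialPerm (fromBlocks E₁₁ E₁₂ E₂₁ E₂₂) ∧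
    E₁₁ * E₂₁ᵀ = 0 ∧ E₁₂ᵀ * E₁₁ = 0 ∧ E₁₂ * E₂₂ᵀ = 0 ∧ E₂₂ᵀ * E₂₁ = 0 := by
  have h11_21 : E₁₁ * E₂₁ᵀ = 0 := by
    rw [he21]
    exact h11.mul_transpose_mul_one_sub_eq_zero E₂₁
  have h11_12 : E₁₁ᵀ * E₁₂ = 0 := by
    rw [he12]
    exact h11.transpose_mul_one_sub_mul_eq_zero E₁₂
  have h12_22 : E₁₂ * E₂₂ᵀ = 0 := by
    rw [he22]
    exact h12.mul_transpose_mul_one_sub_eq_zero _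
  have h21_22 : E₂₁ᵀ * E₂₂ = 0 := by
    rw [he22, Matrix.mul_assoc]
    exact h21.transpose_mul_one_sub_mul_eq_zero _
  refine ⟨h11.fromBlocks h12 h21 h22 h11_12 h21_22 h11_21 h12_22, h11_21, ?_, h12_22, ?_⟩
  · simpa using congrArg Matrix.transpose h11_12
  · simpa using congrArg Matrix.transpose h21_22

/-- If `E₁₁, E₁₂, E₂₁, E₂₂ ∈ P_n` satisfy `E₂₁ = E₂₁(𝟙 - J₁₁)`,
`E₁₂ = (𝟙 - I₁₁)E₁₂` and `E₂₂ = (𝟙 - I₂₁)E₂₂(𝟙 - J₁₂)` (where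
`I_{ij} = E_{ij}E_{ij}ᵀ`, `J_{ij} = E_{ij}ᵀE_{ij}`), then the block matrix
`E = [[E₁₁,E₁₂],[E₂₁,E₂₂]]` belongs to `P_{2n}`, and
`E₁₁E₂₁ᵀ = 0`, `E₁₂ᵀE₁₁ = 0`, `E₁₂E₂₂ᵀ = 0`, `E₂₂ᵀE₂₁ = 0`. -/
theorem blockE_inP {F : Type*} [Field F] {n : ℕ} (hn : 0 < n)
    (E₁₁ E₁₂ E₂₁ E₂₂ : Matrix (Fin n) (Fin n) F)
    (h11 : InP E₁₁) (h12 : InP E₁₂) (h21 : InP E₂₁) (h22 : InP E₂₂)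
    (he21 : E₂₁ = E₂₁ * (1 - E₁₁ᵀ * E₁₁))
    (he12 : E₁₂ = (1 - E₁₁ * E₁₁ᵀ) * E₁₂)
    (he22 : E₂₂ = (1 - E₂₁ * E₂₁ᵀ) * E₂₂ * (1 - E₁₂ᵀ * E₁₂)) :
    InP (blk E₁₁ E₁₂ E₂₁ E₂₂) ∧
    E₁₁ * E₂₁ᵀ = 0 ∧ E₁₂ᵀ * E₁₁ = 0 ∧ E₁₂ * E₂₂ᵀ = 0 ∧ E₂₂ᵀ * E₂₁ = 0 := by
  simp only [inP_iff_isPartialPerm] at h11 h12 h21 h22 ⊢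
  exact (blockE_inP_general h11 h12 h21 h22 he21 he12 he22).imp_left fun hE =>
    hE.submatrix finSumFinEquiv.symm.injective finSumFinEquiv.symm.injective
end

section
/- For every n×n matrix A over a field F with n = 2^k for some k ≥ 0, there exists an LEU-decomposition of A (taking I = J = 𝟙): there exist an invertible lower triangular matrix L, a matrix E ∈ P_n, and an upper triangular matrix U with unit diagonal such that A = L⁻¹ E U⁻¹, L − (𝟙 − I_E) ∈ F_{𝟙, I_E}, and U − (𝟙 − J_E) ∈ F_{J_E, 𝟙}. -/
open Matrix

/-!
Call a position of a matrix a pivot if it carries a `1` which is the only nonzero entry of its row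
and of its column. Among the nonzero entries that are not pivots choose `(p, t)` minimal in the
product order. The entries of column `t` above it and of row `p` to its left must vanish, since a
nonzero one would be a pivot in line with the nonzero entry at `(p, t)`. So clearing column `t` by
row operations and row `p` by column operations takes a lower triangular factor on the left and an
upper unitriangular one on the right, and turns `(p, t)` into a pivot without spoiling the old ones.
When this process stops, every nonzero entry is a pivot, which means that the matrix lies in `P_n`.
The left factor only ever changes columns of the identity indexed by pivot rows, and the right
factor only rows indexed by pivot columns; this gives the conditions on `F_{𝟙, I_E}` and
`F_{J_E, 𝟙}`.
-/

section LowerElim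

variable {R m : Type*} [LinearOrder m]

/-- Lower triangular matrices with diagonal entries in `D` that agree with the identity in all
columns outside `S`, as products of elimination matrices with pivots in the rows `S` do.
The transpose of such a matrix plays the same role for column operations. -/
structure IsLowerElim [Semiring R] (D : Submonoid R) (S : Set m) (L : Matrix m m R) : Prop where
  isLowerTriangular : L.IsLowerTriangular
  diag_mem : ∀ i, L i i ∈ D
  col_eq_single : ∀ j ∉ S, L.col j = Pi.single j 1

theorem mul_apply_self_of_isLowerTriangular [Fintype m] [NonUnitalNonAssocSemiring R]
    {L M : Matrix m m R} (hL : L.IsLowerTriangular) (hM : M.IsLowerTriangular) (i : m) :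
    (L * M) i i = L i i * M i i := by
  rw [mul_apply]
  refine Finset.sum_eq_single_of_mem i (Finset.mem_univ i) fun k _ hki => ?_
  rcases hki.lt_or_gt with hlt | hgt
  · rw [hM hlt, mul_zero]
  · rw [hL hgt, zero_mul]

namespace IsLowerElim

section Semiring

variable [Semiring R] {D : Submonoid R} {S T : Set m} {L M : Matrix m m R}

theorem mono (hL : IsLowerElim D S L) (hST : S ⊆ T) : IsLowerElim D T L :=
  ⟨hL.isLowerTriangular, hL.diag_mem, fun j hj => hL.col_eq_single j fun hjS => hj (hST hjS)⟩

protected theorem one : IsLowerElim D S (1 : Matrix m m R) where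
  isLowerTriangular := blockTriangular_one
  diag_mem i := by simp only [one_apply_eq, one_mem]
  col_eq_single j _ := by
    ext k
    rw [col_apply, one_eq_pi_single, Pi.single_comm]

protected theorem mul [Fintype m] (hL : IsLowerElim D S L) (hM : IsLowerElim D S M) :
    IsLowerElim D S (L * M) where
  isLowerTriangular := hL.isLowerTriangular.mul hM.isLowerTriangular
  diag_mem i := by
    rw [mul_apply_self_of_isLowerTriangular hL.isLowerTriangular hM.isLowerTriangular]
    exact mul_mem (hL.diag_mem i) (hM.diag_mem i)
  col_eq_single j hj := by
    rw [← mulVec_single_one, ← mulVec_mulVec, mulVec_single_one, hM.col_eq_single j hj,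
      mulVec_single_one, hL.col_eq_single j hj]

theorem one_add_vecMulVec_single {p : m} {u : m → R} (hu : ∀ k < p, u k = 0)
    (hup : 1 + u p ∈ D) : IsLowerElim D {p} (1 + vecMulVec u (Pi.single p 1)) where
  isLowerTriangular := by
    refine blockTriangular_one.add fun k l (hkl : k < l) => ?_
    rw [vecMulVec_apply]
    rcases eq_or_ne l p with rfl | hl
    · rw [hu k hkl, zero_mul]
    · rw [Pi.single_eq_of_ne hl, mul_zero]
  diag_mem i := by
    rcases eq_or_ne i p with rfl | hi
    · simpa [vecMulVec_apply] using hup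
    · simp [vecMulVec_apply, hi]
  col_eq_single j hj := by
    ext k
    simp [vecMulVec_apply, Set.mem_singleton_iff.not.1 hj, one_apply, Pi.single_apply]

end Semiring

theorem isUnit [Fintype m] [CommRing R] {D : Submonoid R} {S : Set m} {L : Matrix m m R}
    (hL : IsLowerElim D S L) (hD : D ≤ IsUnit.submonoid R) : IsUnit L := by
  rw [isUnit_iff_isUnit_det, det_of_isLowerTriangular L hL.isLowerTriangular]
  exact IsUnit.prod_univ_iff.2 fun i => hD (hL.diag_mem i)

theorem sub_mul_diagonal_indicator [Fintype m] [Ring R] {D : Submonoid R} {S : Set m}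
    {L : Matrix m m R} (hL : IsLowerElim D S L) :
    (L - (1 - diagonal (S.indicator 1))) * diagonal (S.indicator 1) =
      L - (1 - diagonal (S.indicator 1)) := by
  ext k j
  rw [mul_diagonal]
  by_cases hj : j ∈ S
  · simp [hj]
  · have hcol : L k j = (1 : Matrix m m R) k j := by
      rw [← col_apply L, hL.col_eq_single j hj, one_eq_pi_single, Pi.single_comm]
    have hdiag : diagonal (S.indicator (1 : m → R)) k j = 0 := by
      simp +contextual [diagonal_apply, hj]
    simp [hj, hcol, hdiag]

end IsLowerElim

end LowerElim

section Pivots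

variable {R m n : Type*} [DecidableEq m] [DecidableEq n]

/-- The positions carrying a `1` which is the only nonzero entry of its row and of its column. -/
def pivots [Zero R] [One R] (B : Matrix m n R) : Set (m × n) :=
  {q | B.row q.1 = Pi.single q.2 1 ∧ B.col q.2 = Pi.single q.1 1}

/-- The matrices all of whose nonzero entries are pivots; the square ones form the set `P_n`. -/
def IsPivotal [Zero R] [One R] (E : Matrix m n R) : Prop :=
  ∀ i j, E i j ≠ 0 → (i, j) ∈ pivots E

theorem pivots_transpose [Zero R] [One R] (B : Matrix m n R) :
    pivots Bᵀ = Prod.swap '' pivots B := by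
  rw [Set.image_swap_eq_preimage_swap]
  exact Set.ext fun _ => and_comm

theorem IsPivotal.transpose [Zero R] [One R] {E : Matrix m n R} (hE : IsPivotal E) :
    IsPivotal Eᵀ :=
  fun j i hij => pivots_transpose E ▸ Set.mem_image_of_mem Prod.swap (hE i j hij)

theorem apply_eq_zero_of_mem_pivots_of_ne_col [Zero R] [One R] {B : Matrix m n R} {i : m} {j l : n}
    (hij : (i, j) ∈ pivots B) (hlj : l ≠ j) : B i l = 0 := by
  simpa [hlj] using congrFun hij.1 l

theorem apply_eq_zero_of_mem_pivots_of_ne_row [Zero R] [One R] {B : Matrix m n R} {i k : m} {j : n}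
    (hij : (i, j) ∈ pivots B) (hki : k ≠ i) : B k j = 0 := by
  simpa [hki] using congrFun hij.2 k

theorem apply_eq_one_of_mem_pivots [Zero R] [One R] {B : Matrix m n R} {i : m} {j : n}
    (hij : (i, j) ∈ pivots B) : B i j = 1 := by
  simpa using congrFun hij.1 j

theorem exists_minimal_nonpivot_of_not_isPivotal [Zero R] [One R] [Preorder m] [Preorder n]
    [WellFoundedLT m] [WellFoundedLT n] {B : Matrix m n R} (hB : ¬ IsPivotal B) :
    ∃ p t, B p t ≠ 0 ∧ (p, t) ∉ pivots B ∧ (∀ k < p, B k t = 0) ∧ ∀ l < t, B p l = 0 := by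
  obtain ⟨⟨p, t⟩, ⟨hpt, hnot⟩, hmin⟩ : ∃ q : m × n,
      Minimal (fun q => B q.1 q.2 ≠ 0 ∧ q ∉ pivots B) q := by
    refine exists_minimal_of_wellFoundedLT _ ?_
    simpa [IsPivotal] using hB
  have mem_pivots_of_lt {q : m × n} (hlt : q < (p, t)) (hq : B q.1 q.2 ≠ 0) : q ∈ pivots B := by
    by_contra hnot'
    exact hlt.not_ge (hmin ⟨hq, hnot'⟩ hlt.le)
  refine ⟨p, t, hpt, hnot, fun k hk => ?_, fun l hl => ?_⟩
  · by_contra hkt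
    have hpivot := mem_pivots_of_lt (Prod.mk_lt_mk_iff_left.2 hk) hkt
    exact hpt (apply_eq_zero_of_mem_pivots_of_ne_row hpivot hk.ne')
  · by_contra hpl
    have hpivot := mem_pivots_of_lt (Prod.mk_lt_mk_iff_right.2 hl) hpl
    exact hpt (apply_eq_zero_of_mem_pivots_of_ne_col hpivot hl.ne')

theorem IsPivotal.inP {F : Type*} [Field F] {E : Matrix m m F} (hE : IsPivotal E) : InP E := by
  refine ⟨fun i j => ?_, fun i j k hj hk => ?_, fun i j k hi hk => ?_⟩
  · exact or_iff_not_imp_left.2 fun hij => apply_eq_one_of_mem_pivots (hE i j hij)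
  · by_contra hjk
    exact hk (apply_eq_zero_of_mem_pivots_of_ne_col (hE i j hj) (Ne.symm hjk))
  · by_contra hik
    exact hk (apply_eq_zero_of_mem_pivots_of_ne_row (hE i j hi) (Ne.symm hik))

theorem IsPivotal.mul_transpose_self [Fintype n] [NonAssocSemiring R] {E : Matrix m n R}
    (hE : IsPivotal E) : E * Eᵀ = diagonal ((Prod.fst '' pivots E).indicator 1) := by
  ext i k
  rw [mul_apply_eq_vecMul]
  by_cases hi : i ∈ Prod.fst '' pivots E
  · obtain ⟨⟨i, j⟩, hij, rfl⟩ := hi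
    have hrow : E i = Pi.single j 1 := hij.1
    have hcol : Eᵀ j = Pi.single i 1 := hij.2
    have hmem : i ∈ Prod.fst '' pivots E := ⟨_, hij, rfl⟩
    rw [hrow, single_one_vecMul, row_apply', hcol]
    simp [diagonal_apply, Pi.single_apply, hmem, eq_comm]
  · have hrow : E i = 0 := by
      ext j
      by_contra hij
      exact hi ⟨_, hE i j hij, rfl⟩
    simp [hrow, diagonal_apply, hi]

theorem IsPivotal.transpose_mul_self [Fintype m] [NonAssocSemiring R] {E : Matrix m n R}
    (hE : IsPivotal E) : Eᵀ * E = diagonal ((Prod.snd '' pivots E).indicator 1) := by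
  have hcols : Prod.fst '' pivots Eᵀ = Prod.snd '' pivots E := by
    rw [pivots_transpose, Set.image_image]
    rfl
  rw [← hcols, ← hE.transpose.mul_transpose_self, transpose_transpose]

end Pivots

section ClearCross

variable {F m n : Type*} [Field F] [DecidableEq m] [DecidableEq n]

/-- Gaussian elimination at the position `(p, t)` on both sides: a rank-one correction removes row
`p` and column `t`, and a single `1` is put back at their intersection. It is meant for
`B p t ≠ 0`. -/
def clearCross (B : Matrix m n F) (p : m) (t : n) : Matrix m n F :=
  B - (B p t)⁻¹ • vecMulVec (B.col t) (B.row p) + single p t 1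

variable {B : Matrix m n F} {p : m} {t : n}

theorem clearCross_apply (k : m) (l : n) :
    clearCross B p t k l = B k l - (B p t)⁻¹ * (B k t * B p l) + single p t 1 k l :=
  rfl

theorem mem_pivots_clearCross (hpt : B p t ≠ 0) : (p, t) ∈ pivots (clearCross B p t) := by
  constructor
  · ext l
    rw [row_apply, clearCross_apply, inv_mul_cancel_left₀ hpt, sub_self, zero_add]
    simp [single_apply, Pi.single_apply, eq_comm]
  · ext k
    rw [col_apply, clearCross_apply, mul_comm (B k t), inv_mul_cancel_left₀ hpt, sub_self, zero_add]
    simp [single_apply, Pi.single_apply, eq_comm]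

theorem pivots_subset_pivots_clearCross (hpt : B p t ≠ 0) :
    pivots B ⊆ pivots (clearCross B p t) := by
  rintro ⟨i, j⟩ hij
  by_cases hpos : i = p ∨ j = t
  · have hij_eq : (i, j) = (p, t) := by
      rcases hpos with rfl | rfl
      · by_contra hne
        exact hpt (apply_eq_zero_of_mem_pivots_of_ne_col hij fun h => hne (by rw [h]))
      · by_contra hne
        exact hpt (apply_eq_zero_of_mem_pivots_of_ne_row hij fun h => hne (by rw [h]))
    exact hij_eq ▸ mem_pivots_clearCross hpt
  · obtain ⟨hip, hjt⟩ := not_or.1 hpos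
    have hit : B i t = 0 := apply_eq_zero_of_mem_pivots_of_ne_col hij (Ne.symm hjt)
    have hpj : B p j = 0 := apply_eq_zero_of_mem_pivots_of_ne_row hij (Ne.symm hip)
    constructor
    · rw [← hij.1]
      ext l
      simp [clearCross_apply, hit, Ne.symm hip]
    · rw [← hij.2]
      ext k
      simp [clearCross_apply, hpj, Ne.symm hjt]

theorem mul_mul_eq_clearCross [Fintype m] [Fintype n] (hpt : B p t ≠ 0) :
    (1 + vecMulVec ((B p t)⁻¹ • (Pi.single p 1 - B.col t)) (Pi.single p 1)) * B *
      (1 + vecMulVec (Pi.single t 1) (Pi.single t 1 - (B p t)⁻¹ • B.row p)) =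
      clearCross B p t := by
  set B' := (1 + vecMulVec ((B p t)⁻¹ • (Pi.single p 1 - B.col t)) (Pi.single p 1)) * B with hB'
  have hrow : B' = B + (B p t)⁻¹ • vecMulVec (Pi.single p 1 - B.col t) (B.row p) := by
    rw [hB', Matrix.add_mul, Matrix.one_mul, vecMulVec_mul, single_one_vecMul, smul_vecMulVec]
  have hcol : B'.col t = Pi.single p 1 := by
    ext k
    simp only [hrow, col_apply, Matrix.add_apply, Matrix.smul_apply, vecMulVec_apply,
      row_apply, Pi.sub_apply, smul_eq_mul]
    field_simp
    ring
  rw [Matrix.mul_add, Matrix.mul_one, mul_vecMulVec, mulVec_single_one, hcol, hrow, clearCross,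
    single_eq_single_vecMulVec_single, sub_vecMulVec, vecMulVec_sub, vecMulVec_smul, smul_sub]
  abel

end ClearCross

section PivotReduction

variable {F m n : Type*} [Field F] [LinearOrder m] [LinearOrder n] [Fintype m] [Fintype n]
  {B C : Matrix m n F}

/-- `C = L * B * U` arises from `B` by two-sided elimination that keeps the pivots of `B`, where `L`
adds multiples of pivot rows of `C` only and `U` multiples of pivot columns of `C` only. Rows may be
rescaled but columns may not, hence the different diagonal conditions on `L` and `U`. -/
structure IsPivotReduction (B C : Matrix m n F) (L : Matrix m m F) (U : Matrix n n F) : Prop where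
  pivots_subset : pivots B ⊆ pivots C
  left : IsLowerElim (IsUnit.submonoid F) (Prod.fst '' pivots C) L
  right : IsLowerElim ⊥ (Prod.snd '' pivots C) Uᵀ
  mul_mul_eq : L * B * U = C

namespace IsPivotReduction

theorem refl (B : Matrix m n F) : IsPivotReduction B B 1 1 where
  pivots_subset := subset_rfl
  left := .one
  right := by
    rw [transpose_one]
    exact .one
  mul_mul_eq := by rw [Matrix.one_mul, Matrix.mul_one]

theorem trans {A : Matrix m n F} {L L' : Matrix m m F} {U U' : Matrix n n F}
    (hAB : IsPivotReduction A B L U) (hBC : IsPivotReduction B C L' U') :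
    IsPivotReduction A C (L' * L) (U * U') where
  pivots_subset := hAB.pivots_subset.trans hBC.pivots_subset
  left := hBC.left.mul (hAB.left.mono (Set.image_mono hBC.pivots_subset))
  right := by
    rw [transpose_mul]
    exact hBC.right.mul (hAB.right.mono (Set.image_mono hBC.pivots_subset))
  mul_mul_eq := by
    rw [← hBC.mul_mul_eq, ← hAB.mul_mul_eq]
    simp only [Matrix.mul_assoc]

theorem clearCross {p : m} {t : n} (hpt : B p t ≠ 0) (hcol : ∀ k < p, B k t = 0)
    (hrow : ∀ l < t, B p l = 0) :
    IsPivotReduction B (clearCross B p t)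
      (1 + vecMulVec ((B p t)⁻¹ • (Pi.single p 1 - B.col t)) (Pi.single p 1))
      (1 + vecMulVec (Pi.single t 1) (Pi.single t 1 - (B p t)⁻¹ • B.row p)) where
  pivots_subset := pivots_subset_pivots_clearCross hpt
  left := by
    refine IsLowerElim.mono (IsLowerElim.one_add_vecMulVec_single (fun k hk => ?_) ?_)
      (Set.singleton_subset_iff.2 ⟨_, mem_pivots_clearCross hpt, rfl⟩)
    · simp [hcol k hk, hk.ne]
    · simp [mul_sub, hpt, IsUnit.mem_submonoid_iff]
  right := by
    rw [transpose_add, transpose_one, transpose_vecMulVec]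
    refine IsLowerElim.mono (IsLowerElim.one_add_vecMulVec_single (fun l hl => ?_) ?_)
      (Set.singleton_subset_iff.2 ⟨_, mem_pivots_clearCross hpt, rfl⟩)
    · simp [hrow l hl, hl.ne]
    · simp [hpt]
  mul_mul_eq := mul_mul_eq_clearCross hpt

end IsPivotReduction

theorem exists_isPivotReduction_isPivotal (B : Matrix m n F) :
    ∃ E L U, IsPivotReduction B E L U ∧ IsPivotal E := by
  induction hS : pivots B using WellFoundedGT.induction generalizing B with
  | _ S ih =>
    subst hS
    by_cases hB : IsPivotal B
    · exact ⟨B, 1, 1, .refl B, hB⟩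
    · obtain ⟨p, t, hpt, hnot, hcol, hrow⟩ := exists_minimal_nonpivot_of_not_isPivotal hB
      have hssubset : pivots B ⊂ pivots (clearCross B p t) :=
        (Set.ssubset_iff_of_subset (pivots_subset_pivots_clearCross hpt)).2
          ⟨(p, t), mem_pivots_clearCross hpt, hnot⟩
      obtain ⟨E, L, U, hred, hE⟩ := ih _ hssubset _ rfl
      exact ⟨E, _, _, (IsPivotReduction.clearCross hpt hcol hrow).trans hred, hE⟩

end PivotReduction

theorem IsPivotReduction.isLEU {F : Type*} [Field F] {n : ℕ}
    {A L E U : Matrix (Fin n) (Fin n) F} (h : IsPivotReduction A E L U) (hE : IsPivotal E) :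
    IsLEU 1 1 A L E U := by
  have hL : IsUnit L := h.left.isUnit le_rfl
  have hU : IsUnit U := (isUnit_transpose U).1 (h.right.isUnit bot_le)
  refine ⟨?_, hE.inP, hL, fun i j hij => h.left.isLowerTriangular hij,
    fun i j hij => h.right.isLowerTriangular hij, h.right.diag_mem, ?_, ?_⟩
  · rw [isUnit_iff_isUnit_det] at hL hU
    rw [← h.mul_mul_eq, Matrix.mul_assoc L, nonsing_inv_mul_cancel_left _ _ hL,
      mul_nonsing_inv_cancel_right _ _ hU]
  · rw [InFIJ, Matrix.one_mul, hE.mul_transpose_self, h.left.sub_mul_diagonal_indicator]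
  · simpa [InFIJ, hE.transpose_mul_self] using
      congrArg transpose h.right.sub_mul_diagonal_indicator

theorem leu_exists_pow_two_general {F : Type*} [Field F] {n : ℕ} (A : Matrix (Fin n) (Fin n) F) :
    ∃ L E U : Matrix (Fin n) (Fin n) F, IsLEU 1 1 A L E U := by
  obtain ⟨E, L, U, hred, hE⟩ := exists_isPivotReduction_isPivotal A
  exact ⟨L, E, U, hred.isLEU hE⟩

/-- Theorem 1 (existence): every `n×n` matrix with `n = 2^k` has an
LEU-decomposition (with `I = J = 𝟙`). -/
theorem leu_exists_pow_two {F : Type*} [Field F] {n : ℕ} (hn : ∃ k : ℕ, n = 2 ^ k)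
    (A : Matrix (Fin n) (Fin n) F) :
    ∃ L E U : Matrix (Fin n) (Fin n) F, IsLEU 1 1 A L E U :=
  leu_exists_pow_two_general A
end

section
/- Let A be an invertible n×n matrix over a field F and let (L, E, U) be an LEU-decomposition of A. Then E is a permutation matrix (has exactly one 1 in every row and every column) and A⁻¹ = U Eᵀ L. -/
open Matrix

/-- A permutation matrix (an element of `S_n`). -/
def IsPermMat {F : Type*} [Field F] {m : Type*} [DecidableEq m]
    (M : Matrix m m F) : Prop :=
  ∃ σ : Equiv.Perm m, ∀ i j, M i j = if σ i = j then 1 else 0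

theorem exists_ne_zero_of_mul_eq_one {R m n : Type*} [NonAssocSemiring R] [Nontrivial R]
    [DecidableEq m] [Fintype n] {M : Matrix m n R} {N : Matrix n m R} (h : M * N = 1) (i : m) :
    ∃ j, M i j ≠ 0 := by
  by_contra! hrow
  have hdiag : (M * N) i i = 0 := by simp [Matrix.mul_apply, hrow]
  exact one_ne_zero <| by rw [← hdiag, h, one_apply_eq]

section

variable {F m : Type*} [Field F] [DecidableEq m]

theorem isPermMat_iff_exists_permMatrix {M : Matrix m m F} :
    IsPermMat M ↔ ∃ σ : Equiv.Perm m, M = σ.permMatrix F := by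
  simp [IsPermMat, ← Matrix.ext_iff, PEquiv.toMatrix_apply]

theorem InP.isPermMat_of_forall_exists_ne_zero [Finite m] {E : Matrix m m F} (hE : InP E)
    (hrow : ∀ i, ∃ j, E i j ≠ 0) : IsPermMat E := by
  obtain ⟨h01, row_unique, col_unique⟩ := hE
  choose f hf using hrow
  have f_injective : Function.Injective f := fun i k hik =>
    col_unique i (f i) k (hf i) (hik ▸ hf k)
  refine ⟨Equiv.ofBijective f (Finite.injective_iff_bijective.1 f_injective), fun i j => ?_⟩
  rw [Equiv.ofBijective_apply]
  split_ifs with hij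
  · exact (h01 i j).resolve_left (hij ▸ hf i)
  · exact not_not.1 fun hne => hij (row_unique i (f i) j (hf i) hne)

variable [Fintype m]

theorem InP.isPermMat_of_isUnit {E : Matrix m m F} (hE : InP E) (hunit : IsUnit E) :
    IsPermMat E := by
  obtain ⟨N, hN⟩ := hunit.exists_right_inv
  exact hE.isPermMat_of_forall_exists_ne_zero (exists_ne_zero_of_mul_eq_one hN)

theorem IsPermMat.inv_eq_transpose {M : Matrix m m F} (hM : IsPermMat M) : M⁻¹ = Mᵀ := by
  obtain ⟨σ, rfl⟩ := isPermMat_iff_exists_permMatrix.1 hM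
  apply inv_eq_right_inv
  rw [transpose_permMatrix, ← permMatrix_mul, inv_mul_cancel, permMatrix_one]

theorem leu_inverse_general {A L E U : Matrix m m F} (hA : IsUnit A) (hE : InP E)
    (hfactor : A = L⁻¹ * E * U⁻¹) : IsPermMat E ∧ A⁻¹ = U * Eᵀ * L := by
  obtain ⟨⟨hL, hEunit⟩, hU⟩ : (IsUnit L ∧ IsUnit E) ∧ IsUnit U := by
    simpa only [hfactor, IsUnit.mul_iff, isUnit_nonsing_inv_iff] using hA
  have hperm : IsPermMat E := hE.isPermMat_of_isUnit hEunit
  refine ⟨hperm, ?_⟩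
  calc A⁻¹ = U⁻¹⁻¹ * E⁻¹ * L⁻¹⁻¹ := by
        rw [hfactor, Matrix.mul_inv_rev, Matrix.mul_inv_rev, Matrix.mul_assoc]
    _ = U * Eᵀ * L := by
        rw [nonsing_inv_nonsing_inv U ((isUnit_iff_isUnit_det U).1 hU), hperm.inv_eq_transpose,
          nonsing_inv_nonsing_inv L ((isUnit_iff_isUnit_det L).1 hL)]

end

/-- If `A` is invertible and `(L,E,U)` is an LEU-decomposition of `A`, then `E`
is a permutation matrix and `A⁻¹ = U Eᵀ L`. -/
theorem leu_inverse {F : Type*} [Field F] {n : ℕ} (hn : 0 < n)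
    (A L E U : Matrix (Fin n) (Fin n) F) (hA : IsUnit A)
    (hLEU : IsLEU 1 1 A L E U) :
    IsPermMat E ∧ A⁻¹ = U * Eᵀ * L :=
  leu_inverse_general hA hLEU.2.1 hLEU.1
end
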